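/- arXiv:1007.3436 — 9 statements merged into one kernel-verified Lean document; each statement's English description precedes it below -/
import Mathlib

section
/- For every integer n ≥ 2 and all positive real numbers a_1, ..., a_{n-1}, setting a_n = 1/(a_1 a_2 ··· a_{n-1}), the improper integral of 1/(1 - x_1² x_2² ··· x_n²) over the box (0, a_1) × (0, a_2) × ··· × (0, a_n) is equal to the integral of the same integrand over the unit cube (0,1)^n. -/
open MeasureTheory Real

/-! The coordinatewise scaling `x ↦ a * x` carries the unit cube onto the box and has Jacobian
`∏ i, a i = 1`. For the same reason it leaves `∏ i, x i`, hence the integrand, unchanged. -/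

theorem preimage_mul_left_univ_pi_Ioo {ι G : Type*} [CommGroupWithZero G] [PartialOrder G]
    [PosMulReflectLT G] {a : ι → G} (ha : ∀ i, 0 < a i) (b c : ι → G) :
    (a * ·) ⁻¹' Set.univ.pi (fun i => Set.Ioo (b i) (c i)) =
      Set.univ.pi fun i => Set.Ioo (b i / a i) (c i / a i) := by
  simp_rw [← fun i => Set.preimage_const_mul_Ioo₀ (b i) (c i) (ha i)]
  rfl

section Scaling

variable {ι : Type*} [Fintype ι] {a : ι → ℝ}

theorem map_mul_left_volume_pi (ha : ∀ i, a i ≠ 0) :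
    Measure.map (a * ·) (volume : Measure (ι → ℝ)) =
      ENNReal.ofReal |(∏ i, a i)⁻¹| • volume := by
  classical
  have hdet : (Matrix.diagonal a).det ≠ 0 := by
    rw [Matrix.det_diagonal]
    exact Finset.prod_ne_zero_iff.2 fun i _ => ha i
  have hdiag : ⇑(Matrix.toLin' (Matrix.diagonal a)) = (a * ·) := by
    ext x i
    exact Matrix.mulVec_diagonal a x i
  rw [← hdiag, Real.map_matrix_volume_pi_eq_smul_volume_pi hdet, Matrix.det_diagonal]

variable {E : Type*} [NormedAddCommGroup E] [NormedSpace ℝ E]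

theorem setIntegral_comp_mul_left_pi (ha : ∀ i, a i ≠ 0) (f : (ι → ℝ) → E) (s : Set (ι → ℝ)) :
    ∫ x in (a * ·) ⁻¹' s, f (a * x) = |(∏ i, a i)⁻¹| • ∫ x in s, f x := by
  have hunit : IsUnit a := Pi.isUnit_iff.2 fun i => (ha i).isUnit
  have hemb : MeasurableEmbedding (a * · : (ι → ℝ) → ι → ℝ) :=
    hunit.isHomeomorph_smul.isClosedEmbedding.measurableEmbedding
  rw [← hemb.setIntegral_map, map_mul_left_volume_pi ha, Measure.restrict_smul,
    integral_smul_measure, ENNReal.toReal_ofReal (abs_nonneg _)]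

theorem box_integral_eq_unit_cube_integral_general (ha : ∀ i, 0 < a i) (hprod : ∏ i, a i = 1)
    (f : ℝ → E) :
    ∫ x in Set.univ.pi fun i => Set.Ioo 0 (a i), f (∏ i, x i) =
      ∫ x in Set.univ.pi fun _ : ι => Set.Ioo (0 : ℝ) 1, f (∏ i, x i) := by
  have hbox : (a * ·) ⁻¹' Set.univ.pi (fun i => Set.Ioo 0 (a i)) =
      Set.univ.pi fun _ : ι => Set.Ioo (0 : ℝ) 1 := by
    simp only [preimage_mul_left_univ_pi_Ioo ha, zero_div, div_self (ha _).ne']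
  have hinv (x : ι → ℝ) : ∏ i, (a * x) i = ∏ i, x i := by
    simp only [Pi.mul_apply, Finset.prod_mul_distrib, hprod, one_mul]
  have hscale := setIntegral_comp_mul_left_pi (fun i => (ha i).ne') (fun x => f (∏ i, x i))
    (Set.univ.pi fun i => Set.Ioo 0 (a i))
  simpa only [hbox, hinv, hprod, inv_one, abs_one, one_smul] using hscale.symm

end Scaling

theorem box_integral_eq_unit_cube_integral (n : ℕ) (hn : 2 ≤ n) (a : Fin n → ℝ)
    (ha : ∀ i, 0 < a i) (hprod : ∏ i, a i = 1) :
    (∫ x : Fin n → ℝ in Set.univ.pi fun i => Set.Ioo 0 (a i),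
        (1 - ∏ i, (x i) ^ 2)⁻¹) =
      ∫ x : Fin n → ℝ in Set.univ.pi fun _ => Set.Ioo (0 : ℝ) 1,
        (1 - ∏ i, (x i) ^ 2)⁻¹ := by
  simpa only [Finset.prod_pow] using
    box_integral_eq_unit_cube_integral_general ha hprod fun t => (1 - t ^ 2)⁻¹
end

section
/- For every integer n ≥ 2, ζ(n) = (2^n/(2^n − 1)) · ∫_{(0,1)^n} 1/(1 − x_1² x_2² ··· x_n²) dx_1 ··· dx_n. -/
/-!
On the open unit cube, `(1 - ∏ xᵢ²)⁻¹` is the geometric series `∑ₖ ∏ xᵢ²ᵏ`, whose terms integrate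
by Fubini to `1 / (2k + 1) ^ n`. Since `n ≥ 2` these are summable, so sum and integral may be
exchanged, and the integral is the sum of `1 / j ^ n` over odd `j`. The even terms of `ζ(n)` add up
to `ζ(n) / 2 ^ n`, so the odd ones add up to `(1 - 1 / 2 ^ n) ζ(n)`.
-/

open MeasureTheory Real

theorem tsum_two_mul_add_one_eq_one_sub_mul_tsum {R : Type*} [NormedRing R] [CompleteSpace R]
    {f : ℕ → R} {c : R} (hf : Summable f) (hc : ∀ k, f (2 * k) = c * f k) :
    ∑' k, f (2 * k + 1) = (1 - c) * ∑' k, f (k + 1) := by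
  have hodd : Summable fun k ↦ f (2 * k + 1) :=
    hf.comp_injective fun a b h ↦ by simpa using h
  have heven : ∀ k, f (2 * k + 1 + 1) = c * f (k + 1) := fun k ↦ hc (k + 1)
  have hsucc : Summable fun k ↦ f (k + 1) := (summable_nat_add_iff 1).2 hf
  have hsplit : ∑' k, f (2 * k + 1) + c * ∑' k, f (k + 1) = ∑' k, f (k + 1) := by
    rw [← hsucc.tsum_mul_left, ← tsum_even_add_odd (f := fun k ↦ f (k + 1)) hodd]
    · simp only [heven]
    · simpa only [heven] using hsucc.mul_left c
  rw [sub_mul, one_mul]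
  exact eq_sub_of_add_eq hsplit

theorem summable_one_div_mul_nat_add_one_pow {m n : ℕ} (hm : m ≠ 0) (hn : 1 < n) :
    Summable fun k : ℕ ↦ (1 : ℝ) / (m * k + 1) ^ n := by
  have hinj : Function.Injective fun k : ℕ ↦ m * k + 1 := fun a b h ↦ by simpa [hm] using h
  simpa [Function.comp_def] using (summable_one_div_nat_pow.2 hn).comp_injective hinj

theorem setIntegral_Ioo_zero_one_pow (k : ℕ) : ∫ x in Set.Ioo (0 : ℝ) 1, x ^ k = 1 / (k + 1) := by
  rw [← integral_Ioc_eq_integral_Ioo, ← intervalIntegral.integral_of_le zero_le_one, integral_pow]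
  simp

theorem hasSum_integral_pow_of_norm_lt_one {α 𝕜 : Type*} [MeasurableSpace α] {μ : Measure α}
    [IsFiniteMeasure μ] [RCLike 𝕜] {f : α → 𝕜} (hf : AEStronglyMeasurable f μ)
    (hlt : ∀ᵐ x ∂μ, ‖f x‖ < 1) (hsum : Summable fun k : ℕ ↦ ∫ x, ‖f x‖ ^ k ∂μ) :
    HasSum (fun k : ℕ ↦ ∫ x, f x ^ k ∂μ) (∫ x, (1 - f x)⁻¹ ∂μ) := by
  have hint (k : ℕ) : Integrable (fun x ↦ f x ^ k) μ := by
    refine .of_bound (hf.pow k) 1 ?_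
    filter_upwards [hlt] with x hx
    simpa only [norm_pow] using pow_le_one₀ (norm_nonneg _) hx.le
  have hgeom : ∫ x, ∑' k : ℕ, f x ^ k ∂μ = ∫ x, (1 - f x)⁻¹ ∂μ := by
    refine integral_congr_ae ?_
    filter_upwards [hlt] with x hx using tsum_geometric_of_norm_lt_one hx
  rw [← hgeom]
  exact hasSum_integral_of_summable_integral_norm hint (by simpa only [norm_pow] using hsum)

section Cube

variable {ι : Type*} [Fintype ι]

theorem setIntegral_univ_pi_prod_eq_prod {𝕜 : Type*} [RCLike 𝕜] {E : ι → Type*}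
    [∀ i, MeasureSpace (E i)] [∀ i, SigmaFinite (volume : Measure (E i))]
    (s : ∀ i, Set (E i)) (f : ∀ i, E i → 𝕜) :
    ∫ x in Set.univ.pi s, ∏ i, f i (x i) = ∏ i, ∫ x in s i, f i x := by
  rw [volume_pi, Measure.restrict_pi_pi, integral_fintype_prod_eq_prod]

theorem setIntegral_unitCube_prod_pow (k : ℕ) :
    ∫ x : ι → ℝ in Set.univ.pi fun _ ↦ Set.Ioo 0 1, ∏ i, x i ^ k =
      1 / (k + 1) ^ Fintype.card ι := by
  rw [setIntegral_univ_pi_prod_eq_prod _ fun _ t ↦ t ^ k]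
  simp [setIntegral_Ioo_zero_one_pow]

theorem norm_prod_pow_lt_one_of_mem_unitCube [Nonempty ι] {x : ι → ℝ}
    (hx : x ∈ Set.univ.pi fun _ ↦ Set.Ioo 0 1) {m : ℕ} (hm : m ≠ 0) :
    ‖∏ i, x i ^ m‖ < 1 := by
  have hx_pos (i : ι) : 0 < x i := (hx i trivial).1
  have hx_lt (i : ι) : x i < 1 := (hx i trivial).2
  rw [norm_of_nonneg (Finset.prod_nonneg fun i _ ↦ (pow_pos (hx_pos i) m).le)]
  calc ∏ i, x i ^ m < ∏ _i : ι, 1 :=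
        Finset.prod_lt_prod_of_nonempty (fun i _ ↦ pow_pos (hx_pos i) m)
          (fun i _ ↦ pow_lt_one₀ (hx_pos i).le (hx_lt i) hm) Finset.univ_nonempty
    _ = 1 := Finset.prod_const_one

theorem hasSum_setIntegral_unitCube_inv_one_sub_prod_pow (hι : 1 < Fintype.card ι) {m : ℕ}
    (hm : m ≠ 0) :
    HasSum (fun k : ℕ ↦ (1 : ℝ) / (m * k + 1) ^ Fintype.card ι)
      (∫ x : ι → ℝ in Set.univ.pi fun _ ↦ Set.Ioo 0 1, (1 - ∏ i, x i ^ m)⁻¹) := by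
  set Q : Set (ι → ℝ) := Set.univ.pi fun _ ↦ Set.Ioo 0 1
  have hQ : MeasurableSet Q := .univ_pi fun _ ↦ measurableSet_Ioo
  have : Nonempty ι := Fintype.card_pos_iff.1 (zero_lt_one.trans hι)
  have : IsFiniteMeasure (volume.restrict Q) := by
    rw [volume_pi, Measure.restrict_pi_pi]
    infer_instance
  have hterm (k : ℕ) :
      ∫ x in Q, (∏ i, x i ^ m) ^ k = 1 / ((m : ℝ) * k + 1) ^ Fintype.card ι := by
    simpa [← Finset.prod_pow, ← pow_mul] using setIntegral_unitCube_prod_pow (ι := ι) (m * k)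
  have hnorm (k : ℕ) : ∫ x in Q, ‖∏ i, x i ^ m‖ ^ k = ∫ x in Q, (∏ i, x i ^ m) ^ k := by
    refine setIntegral_congr_fun hQ fun x hx ↦ ?_
    have hprod : 0 ≤ ∏ i, x i ^ m := Finset.prod_nonneg fun i _ ↦ pow_nonneg (hx i trivial).1.le m
    simp only [norm_of_nonneg hprod]
  simp only [← hterm]
  refine hasSum_integral_pow_of_norm_lt_one ?_ ?_ ?_
  · exact (by fun_prop : Continuous fun x : ι → ℝ ↦ ∏ i, x i ^ m).aestronglyMeasurable
  · filter_upwards [ae_restrict_mem hQ] with x hx using norm_prod_pow_lt_one_of_mem_unitCube hx hm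
  · simpa only [hnorm, hterm] using summable_one_div_mul_nat_add_one_pow hm hι

end Cube

theorem zeta_eq_const_mul_unit_cube_integral_sq (n : ℕ) (hn : 2 ≤ n) :
    (∑' k : ℕ, (1 : ℝ) / (k + 1) ^ n) =
      2 ^ n / (2 ^ n - 1) *
        ∫ x : Fin n → ℝ in Set.univ.pi fun _ => Set.Ioo (0 : ℝ) 1,
          (1 - ∏ i, (x i) ^ 2)⁻¹ := by
  have hintegral := hasSum_setIntegral_unitCube_inv_one_sub_prod_pow (ι := Fin n)
    (hn.trans_eq (Fintype.card_fin n).symm) two_ne_zero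
  have hodd : ∑' k : ℕ, (1 : ℝ) / (2 * k + 1) ^ n =
      (1 - 1 / 2 ^ n) * ∑' k : ℕ, (1 : ℝ) / (k + 1) ^ n := by
    simpa using tsum_two_mul_add_one_eq_one_sub_mul_tsum (c := (1 : ℝ) / 2 ^ n)
      (summable_one_div_nat_pow.2 hn) fun k ↦ by simp [mul_pow, mul_comm]
  have hpow : (2 : ℝ) ^ n - 1 ≠ 0 := (sub_pos.2 (one_lt_pow₀ one_lt_two (by lia))).ne'
  rw [← hintegral.tsum_eq, Fintype.card_fin, Nat.cast_ofNat, hodd]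
  field_simp
end

section
/- The double integral over the unit square of 1/(1 − xy) equals 4/3 times the double integral over the unit square of 1/(1 − x²y²); that is, ∫_0^1 ∫_0^1 1/(1 − xy) dx dy = (4/3) ∫_0^1 ∫_0^1 1/(1 − x²y²) dx dy. -/
open MeasureTheory Real

/-!
Expanding both integrands as geometric series in `x * y` and integrating term by term turns the left
side into `∑ 1 / (n + 1) ^ 2` and the integral on the right into `∑ 1 / (2 * n + 1) ^ 2`. The terms
of the first series with even denominators add up to a quarter of its sum, so the second series is
three quarters of the first.
-/

/-- The open unit square, the domain of both double integrals; an `abbrev`, hence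
interchangeable with the product of intervals it stands for. -/
abbrev unitSquare : Set (ℝ × ℝ) := Set.Ioo 0 1 ×ˢ Set.Ioo 0 1

lemma mul_mem_Ioo_zero_one {R : Type*} [Semiring R] [PartialOrder R] [IsStrictOrderedRing R]
    {x y : R} (hx : x ∈ Set.Ioo 0 1) (hy : y ∈ Set.Ioo 0 1) : x * y ∈ Set.Ioo 0 1 :=
  ⟨mul_pos hx.1 hy.1, mul_lt_one_of_nonneg_of_lt_one_left hx.1.le hx.2 hy.2.le⟩

lemma integrableOn_Ioo_pow (a b : ℝ) (n : ℕ) :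
    IntegrableOn (fun x : ℝ ↦ x ^ n) (Set.Ioo a b) :=
  (continuous_pow n).integrableOn_Icc.mono_set Set.Ioo_subset_Icc_self

lemma integral_Ioo_zero_one_pow (n : ℕ) :
    ∫ x in Set.Ioo (0 : ℝ) 1, x ^ n = 1 / ((n : ℝ) + 1) := by
  rw [← integral_Ioc_eq_integral_Ioo, ← intervalIntegral.integral_of_le zero_le_one]
  simp

lemma integrableOn_unitSquare_mul_pow (n : ℕ) :
    IntegrableOn (fun p : ℝ × ℝ ↦ (p.1 * p.2) ^ n) unitSquare := by
  simp only [mul_pow, IntegrableOn, Measure.volume_eq_prod, ← Measure.prod_restrict]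
  exact (integrableOn_Ioo_pow 0 1 n).mul_prod (integrableOn_Ioo_pow 0 1 n)

lemma integral_unitSquare_mul_pow (n : ℕ) :
    ∫ p in unitSquare, (p.1 * p.2) ^ n = 1 / ((n : ℝ) + 1) ^ 2 := by
  simp only [mul_pow, Measure.volume_eq_prod]
  rw [setIntegral_prod_mul (fun x : ℝ ↦ x ^ n) (fun y : ℝ ↦ y ^ n), integral_Ioo_zero_one_pow,
    ← sq, one_div_pow]

lemma integral_unitSquare_norm_const_mul_mul_pow (c : ℝ) (n : ℕ) :
    ∫ p in unitSquare, ‖c * (p.1 * p.2) ^ n‖ = |c| * (1 / ((n : ℝ) + 1) ^ 2) := by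
  rw [← integral_unitSquare_mul_pow, ← integral_const_mul]
  refine setIntegral_congr_fun (measurableSet_Ioo.prod measurableSet_Ioo) fun p hp ↦ ?_
  have hpos : 0 < p.1 * p.2 := (mul_mem_Ioo_zero_one hp.1 hp.2).1
  simp only [norm_mul, Real.norm_eq_abs, abs_of_pos (pow_pos hpos n)]

lemma hasSum_integral_unitSquare_comp_mul {ι : Type*} [Countable ι] {c : ι → ℝ} {e : ι → ℕ}
    {f : ℝ → ℝ} (hc : Summable fun i ↦ |c i| * (1 / ((e i : ℝ) + 1) ^ 2))
    (hf : ∀ t ∈ Set.Ioo (0 : ℝ) 1, HasSum (fun i ↦ c i * t ^ e i) (f t)) :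
    HasSum (fun i ↦ c i * (1 / ((e i : ℝ) + 1) ^ 2)) (∫ p in unitSquare, f (p.1 * p.2)) := by
  have hsum : ∫ p in unitSquare, ∑' i, c i * (p.1 * p.2) ^ e i =
      ∫ p in unitSquare, f (p.1 * p.2) :=
    setIntegral_congr_fun (measurableSet_Ioo.prod measurableSet_Ioo) fun p hp ↦
      (hf _ (mul_mem_Ioo_zero_one hp.1 hp.2)).tsum_eq
  simpa only [integral_const_mul, integral_unitSquare_mul_pow, hsum] using
    hasSum_integral_of_summable_integral_norm (μ := volume.restrict unitSquare)
      (F := fun i p ↦ c i * (p.1 * p.2) ^ e i)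
      (fun i ↦ (integrableOn_unitSquare_mul_pow (e i)).const_mul (c i))
      (by simpa only [integral_unitSquare_norm_const_mul_mul_pow] using hc)

section OddReciprocals

variable {s : ℕ}

lemma summable_one_div_nat_add_one_pow (hs : 1 < s) :
    Summable fun n : ℕ ↦ 1 / ((n : ℝ) + 1) ^ s := by
  simpa using (summable_nat_add_iff 1).2 (Real.summable_one_div_nat_pow.2 hs)

lemma summable_one_div_nat_mul_add_one_pow {k : ℕ} (hk : k ≠ 0) (hs : 1 < s) :
    Summable fun n : ℕ ↦ 1 / (((k * n : ℕ) : ℝ) + 1) ^ s :=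
  (summable_one_div_nat_add_one_pow hs).comp_injective (mul_right_injective₀ hk)

lemma tsum_one_div_two_mul_add_one_pow (hs : 1 < s) :
    ∑' n : ℕ, 1 / (((2 * n : ℕ) : ℝ) + 1) ^ s =
      (1 - 1 / 2 ^ s) * ∑' n : ℕ, 1 / ((n : ℝ) + 1) ^ s := by
  have even_denominator (n : ℕ) :
      1 / (((2 * n + 1 : ℕ) : ℝ) + 1) ^ s = 1 / 2 ^ s * (1 / ((n : ℝ) + 1) ^ s) := by
    rw [one_div_mul_one_div, ← mul_pow]
    push_cast
    ring
  have hsplit := tsum_even_add_odd (f := fun n : ℕ ↦ 1 / ((n : ℝ) + 1) ^ s)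
    (summable_one_div_nat_mul_add_one_pow two_ne_zero hs)
    (by simpa only [even_denominator] using (summable_one_div_nat_add_one_pow hs).mul_left _)
  simp only [even_denominator, tsum_mul_left] at hsplit
  linarith

end OddReciprocals

lemma integral_unitSquare_inv_one_sub_mul_pow {k : ℕ} (hk : k ≠ 0) :
    ∫ p in unitSquare, (1 - (p.1 * p.2) ^ k)⁻¹ = ∑' n : ℕ, 1 / (((k * n : ℕ) : ℝ) + 1) ^ 2 := by
  have hgeom (t : ℝ) (ht : t ∈ Set.Ioo (0 : ℝ) 1) :
      HasSum (fun n : ℕ ↦ 1 * t ^ (k * n)) (1 - t ^ k)⁻¹ := by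
    simpa only [one_mul, pow_mul] using
      hasSum_geometric_of_lt_one (pow_nonneg ht.1.le k) (pow_lt_one₀ ht.1.le ht.2 hk)
  have hsum := hasSum_integral_unitSquare_comp_mul
    (by simpa using summable_one_div_nat_mul_add_one_pow hk one_lt_two) hgeom
  simpa only [one_mul] using hsum.tsum_eq.symm

theorem double_integral_one_sub_xy_eq :
    (∫ p : ℝ × ℝ in Set.Ioo (0 : ℝ) 1 ×ˢ Set.Ioo (0 : ℝ) 1,
        (1 - p.1 * p.2)⁻¹) =
      4 / 3 *
        ∫ p : ℝ × ℝ in Set.Ioo (0 : ℝ) 1 ×ˢ Set.Ioo (0 : ℝ) 1,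
          (1 - p.1 ^ 2 * p.2 ^ 2)⁻¹ := by
  have hleft : ∫ p in unitSquare, (1 - p.1 * p.2)⁻¹ = ∑' n : ℕ, 1 / ((n : ℝ) + 1) ^ 2 := by
    simpa only [pow_one, one_mul] using integral_unitSquare_inv_one_sub_mul_pow one_ne_zero
  have hright : ∫ p in unitSquare, (1 - p.1 ^ 2 * p.2 ^ 2)⁻¹ =
      3 / 4 * ∑' n : ℕ, 1 / ((n : ℝ) + 1) ^ 2 := by
    simp only [← mul_pow]
    rw [integral_unitSquare_inv_one_sub_mul_pow two_ne_zero,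
      tsum_one_div_two_mul_add_one_pow one_lt_two]
    norm_num
  rw [hleft, hright]
  ring
end

section
/- Let n ≥ 2 and let u_1, ..., u_n be real numbers (indices taken modulo n, so u_{n+1} = u_1). Let A be the n × n real matrix whose (i,i) entry is cosh(u_i)/cosh(u_{i+1}), whose (i, i+1) entry (cyclically, so including the entry in position (n,1)) is −sinh(u_i) sinh(u_{i+1})/cosh²(u_{i+1}), and whose all other entries are 0. Then det(A) = 1 − ∏_{i=1}^n tanh²(u_i). -/
open Real

/-!
If the nonzero entries of a matrix lie in the positions `(i, i)` and `(i, σ i)` for a cycle `σ`,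
then only the identity and `σ` contribute to the Leibniz expansion of its determinant: a permutation
`τ` that agrees at each point with the identity or with `σ` is disjoint from `τ⁻¹ * σ`, and a cycle
is not a product of two nontrivial disjoint permutations. For the Jacobian, the diagonal product
telescopes to `1`, and the sign of the cycle cancels all but one of the minus signs in the other
product.
-/

section Cycle

open Equiv Equiv.Perm

theorem eq_one_or_eq_one_of_isCycle_mul {α : Type*} {τ ρ : Perm α} (hτρ : τ.Disjoint ρ)
    (h : (τ * ρ).IsCycle) : τ = 1 ∨ ρ = 1 := by
  by_contra! hne
  obtain ⟨x, hx⟩ : ∃ x, τ x ≠ x := not_forall.1 fun hfix ↦ hne.1 (Perm.ext hfix)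
  obtain ⟨y, hy⟩ : ∃ y, ρ y ≠ y := not_forall.1 fun hfix ↦ hne.2 (Perm.ext hfix)
  have hρx : ρ x = x := (hτρ x).resolve_left hx
  have hτy : τ y = y := (hτρ y).resolve_right hy
  obtain ⟨k, hk⟩ : ∃ k : ℤ, ((τ * ρ) ^ k) x = y :=
    h.exists_zpow_eq (fun hfix ↦ hx (hτρ.mul_apply_eq_iff.1 hfix).1)
      (fun hfix ↦ hy (hτρ.mul_apply_eq_iff.1 hfix).2)
  have hτk : (τ ^ k) x = y := by
    rwa [hτρ.commute.mul_zpow, Perm.mul_apply,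
      zpow_apply_eq_self_of_apply_eq_self hρx] at hk
  rw [← hτk, apply_zpow_apply_eq_iff] at hτy
  exact hx hτy

theorem eq_one_or_eq_of_forall_apply_eq_or_eq {α : Type*} {σ τ : Perm α} (hσ : σ.IsCycle)
    (h : ∀ i, τ i = i ∨ τ i = σ i) : τ = 1 ∨ τ = σ := by
  have hdisj : τ.Disjoint (τ⁻¹ * σ) := fun i ↦
    (h i).imp_right fun hi ↦ inv_eq_iff_eq.2 hi.symm
  have hcycle : (τ * (τ⁻¹ * σ)).IsCycle := by rwa [mul_inv_cancel_left]
  exact (eq_one_or_eq_one_of_isCycle_mul hdisj hcycle).imp_right inv_mul_eq_one.1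

variable {ι : Type*} [Fintype ι]

theorem prod_div_apply_perm_eq_one {G₀ : Type*} [CommGroupWithZero G₀] (σ : Perm ι)
    {c : ι → G₀} (hc : ∀ i, c i ≠ 0) : ∏ i, c i / c (σ i) = 1 := by
  rw [Finset.prod_div_distrib, Equiv.prod_comp σ c,
    div_self (Finset.prod_ne_zero_iff.2 fun i _ ↦ hc i)]

variable [DecidableEq ι] {σ : Perm ι}

theorem sign_mul_prod_support_neg_of_isCycle {R : Type*} [CommRing R] (hσ : σ.IsCycle) (f : ι → R) :
    (sign σ : R) * ∏ i ∈ σ.support, -f i = -∏ i ∈ σ.support, f i := by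
  rw [hσ.sign, Finset.prod_neg]
  push_cast
  rw [neg_mul, ← mul_assoc, ← mul_pow, neg_one_mul, neg_neg, one_pow, one_mul]

theorem det_eq_prod_diag_add_sign_mul_prod_of_isCycle {R : Type*} [CommRing R]
    (hσ : σ.IsCycle) {A : Matrix ι ι R} (hA : ∀ i j, j ≠ i → j ≠ σ i → A i j = 0) :
    A.det = ∏ i, A i i + sign σ * ∏ i, A i (σ i) := by
  have vanish : ∀ τ : Perm ι, τ ≠ 1 ∧ τ ≠ σ → (sign τ : R) * ∏ i, A i (τ i) = 0 := by
    intro τ hτ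
    obtain ⟨i, hi, hσi⟩ : ∃ i, τ i ≠ i ∧ τ i ≠ σ i := by
      by_contra! h
      exact not_or.2 hτ
        (eq_one_or_eq_of_forall_apply_eq_or_eq hσ fun i ↦ or_iff_not_imp_left.2 (h i))
    rw [Finset.prod_eq_zero (Finset.mem_univ i) (hA i (τ i) hi hσi), mul_zero]
  calc A.det = ∑ τ : Perm ι, (sign τ : R) * ∏ i, A i (τ i) := by
        rw [← Matrix.det_transpose, Matrix.det_apply']
        simp only [Matrix.transpose_apply]
    _ = ∏ i, A i i + sign σ * ∏ i, A i (σ i) := by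
        rw [Fintype.sum_eq_add 1 σ hσ.ne_one.symm vanish]
        simp

theorem prod_support_mul_apply_div_sq {G : Type*} [DivisionCommMonoid G] (σ : Perm ι)
    (s c : ι → G) :
    ∏ i ∈ σ.support, s i * s (σ i) / c (σ i) ^ 2 = ∏ i ∈ σ.support, (s i / c i) ^ 2 := by
  have hreindex : ∀ f : ι → G, ∏ i ∈ σ.support, f (σ i) = ∏ i ∈ σ.support, f i := fun f ↦
    σ.prod_comp _ f (coe_support_eq_set_support σ).ge
  rw [Finset.prod_div_distrib, Finset.prod_mul_distrib, hreindex s, hreindex (c · ^ 2),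
    ← Finset.prod_mul_distrib, ← Finset.prod_div_distrib]
  exact Finset.prod_congr rfl fun i _ ↦ by rw [div_pow, sq (s i)]

theorem det_jacobian_hyperbolic_general {K : Type*} [Field K] (hσ : σ.IsCycle) (s : ι → K)
    {c : ι → K} (hc : ∀ i, c i ≠ 0) :
    Matrix.det (Matrix.of fun i j ↦
        if j = i then c i / c (σ i)
        else if j = σ i then -(s i * s (σ i)) / c (σ i) ^ 2
        else 0) =
      1 - ∏ i ∈ σ.support, (s i / c i) ^ 2 := by
  set A : Matrix ι ι K := Matrix.of fun i j ↦
    if j = i then c i / c (σ i) else if j = σ i then -(s i * s (σ i)) / c (σ i) ^ 2 else 0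
  have hdiag : ∏ i, A i i = 1 := by simpa [A] using prod_div_apply_perm_eq_one σ hc
  have hcycle : ∏ i, A i (σ i) = ∏ i ∈ σ.support, -(s i * s (σ i) / c (σ i) ^ 2) := by
    symm
    apply Finset.prod_subset_one_on_sdiff (Finset.subset_univ _)
    · intro i hi
      have hfix : σ i = i := by simpa using hi
      simp [A, hfix, hc i]
    · intro i hi
      simp [A, mem_support.1 hi, neg_div]
  calc A.det = ∏ i, A i i + sign σ * ∏ i, A i (σ i) :=
        det_eq_prod_diag_add_sign_mul_prod_of_isCycle hσ fun i j hi hσi ↦ by simp [A, hi, hσi]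
    _ = 1 - ∏ i ∈ σ.support, (s i / c i) ^ 2 := by
        rw [hdiag, hcycle, sign_mul_prod_support_neg_of_isCycle hσ, prod_support_mul_apply_div_sq,
          ← sub_eq_add_neg]

end Cycle

theorem det_jacobian_hyperbolic (n : ℕ) (hn : 2 ≤ n) [NeZero n] (u : Fin n → ℝ) :
    Matrix.det (Matrix.of fun i j : Fin n =>
        if j = i then Real.cosh (u i) / Real.cosh (u (i + 1))
        else if j = i + 1 then
          -(Real.sinh (u i) * Real.sinh (u (i + 1))) / (Real.cosh (u (i + 1))) ^ 2
        else 0) =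
      1 - ∏ i, Real.tanh (u i) ^ 2 := by
  simpa only [finRotate_apply, support_finRotate_of_le hn, tanh_eq_sinh_div_cosh] using
    det_jacobian_hyperbolic_general (isCycle_finRotate_of_le hn) (fun i ↦ sinh (u i))
      fun i ↦ (cosh_pos (u i)).ne'
end

section
/- Let x_1, x_2, x_3 ∈ (0,1) (so that x_1² x_2² x_3² < 1), and for each i ∈ {1,2,3} (indices modulo 3) define u_i = arcsinh( x_i · √( (1 + x_{i+1}² + x_{i-1}² x_{i+1}²) / (1 − x_1² x_2² x_3²) ) ). Then for each i (indices modulo 3), x_i = sinh(u_i)/cosh(u_{i+1}). -/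
open Real

/-!
Write `uᵢ = arsinh (xᵢ √(Nᵢ / D))` with `D = 1 - x₀² x₁² x₂²`. Going once around the cycle gives
`Nᵢ = D + xᵢ₊₁² Nᵢ₊₁`, so `cosh² uᵢ₊₁ = 1 + xᵢ₊₁² Nᵢ₊₁ / D = Nᵢ / D`. The square root in `sinh uᵢ`
is therefore exactly `cosh uᵢ₊₁`.
-/

lemma cosh_arsinh_mul_sqrt_div {N D : ℝ} (x : ℝ) (hN : 0 ≤ N) (hD : 0 < D) :
    cosh (arsinh (x * √(N / D))) = √((D + x ^ 2 * N) / D) := by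
  rw [cosh_arsinh, mul_pow, sq_sqrt (div_nonneg hN hD.le), add_div, div_self hD.ne',
    mul_div_assoc]

lemma sinh_arsinh_div_cosh_arsinh_mul_sqrt_div {N D : ℝ} (x y : ℝ) (hN : 0 ≤ N) (hD : 0 < D) :
    sinh (arsinh (x * √((D + y ^ 2 * N) / D))) / cosh (arsinh (y * √(N / D))) = x := by
  have hpos : 0 < √((D + y ^ 2 * N) / D) := by positivity
  rw [sinh_arsinh, cosh_arsinh_mul_sqrt_div y hN hD, mul_div_cancel_right₀ x hpos.ne']

lemma mul_add_one_mul_sub_one_fin_three {M : Type*} [CommMonoid M] (f : Fin 3 → M) (i : Fin 3) :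
    f i * f (i + 1) * f (i - 1) = f 0 * f 1 * f 2 := by
  fin_cases i
  · rfl
  · exact (mul_rotate (f 0) (f 1) (f 2)).symm
  · exact mul_rotate (f 2) (f 0) (f 1)

lemma one_add_add_mul_eq_cyclic {R : Type*} [CommRing R] (f : Fin 3 → R) (i : Fin 3) :
    1 + f (i + 1) + f (i - 1) * f (i + 1) =
      (1 - f 0 * f 1 * f 2) + f (i + 1) * (1 + f (i - 1) + f i * f (i - 1)) := by
  rw [← mul_add_one_mul_sub_one_fin_three f i]
  ring

lemma sq_mul_sq_mul_sq_lt_one {a b c : ℝ} (ha : |a| < 1) (hb : |b| ≤ 1) (hc : |c| ≤ 1) :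
    a ^ 2 * b ^ 2 * c ^ 2 < 1 := by
  have hab : a ^ 2 * b ^ 2 < 1 :=
    mul_lt_one_of_nonneg_of_lt_one_left (sq_nonneg a) ((sq_lt_one_iff_abs_lt_one a).2 ha)
      ((sq_le_one_iff_abs_le_one b).2 hb)
  exact mul_lt_one_of_nonneg_of_lt_one_left (by positivity) hab
    ((sq_le_one_iff_abs_le_one c).2 hc)

theorem hyperbolic_inverse_formulas_dim_three_general (x : Fin 3 → ℝ)
    (hx : x 0 ^ 2 * x 1 ^ 2 * x 2 ^ 2 < 1)
    (u : Fin 3 → ℝ)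
    (hu : ∀ i, u i = arsinh (x i *
      √((1 + x (i + 1) ^ 2 + x (i - 1) ^ 2 * x (i + 1) ^ 2) /
        (1 - x 0 ^ 2 * x 1 ^ 2 * x 2 ^ 2)))) (i : Fin 3) :
    x i = sinh (u i) / cosh (u (i + 1)) := by
  have add_one_add_one : i + 1 + 1 = i - 1 := by decide +revert
  rw [hu i, hu (i + 1), add_one_add_one, add_sub_cancel_right,
    one_add_add_mul_eq_cyclic (fun j ↦ x j ^ 2) i]
  exact (sinh_arsinh_div_cosh_arsinh_mul_sqrt_div _ _ (by positivity) (sub_pos.2 hx)).symm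

theorem hyperbolic_inverse_formulas_dim_three (x : Fin 3 → ℝ)
    (hx : ∀ i, x i ∈ Set.Ioo (0 : ℝ) 1)
    (u : Fin 3 → ℝ)
    (hu : ∀ i, u i = Real.arsinh (x i *
      Real.sqrt ((1 + x (i + 1) ^ 2 + x (i - 1) ^ 2 * x (i + 1) ^ 2) /
        (1 - x 0 ^ 2 * x 1 ^ 2 * x 2 ^ 2)))) :
    ∀ i, x i = Real.sinh (u i) / Real.cosh (u (i + 1)) := by
  have habs (i : Fin 3) : |x i| < 1 := (abs_of_pos (hx i).1).trans_lt (hx i).2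
  exact hyperbolic_inverse_formulas_dim_three_general x
    (sq_mul_sq_mul_sq_lt_one (habs 0) (habs 1).le (habs 2).le) u hu
end

section
/- The limit as a → 0⁺ of ∫_0^{arcsinh(a)} arcsinh( cosh(u) / a ) du is 0. -/
open Real Filter

/-!
Although `arsinh (cosh u / a)` blows up as `a → 0`, it does so only logarithmically, while the
interval of integration has length `O(|a|)`. The crude bound `|arsinh x| ≤ 2 √|x|` is already
enough: if `cosh ≤ M` near `0`, it makes the integral `O(|a| √(M / |a|)) = O(√(M |a|))`.
-/

open Asymptotics Topology

theorem sq_le_four_mul_sinh {x : ℝ} (hx : 0 ≤ x) : x ^ 2 ≤ 4 * sinh x := by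
  have hexp : 1 + x + x ^ 2 / 2 ≤ exp x := quadratic_le_exp_of_nonneg hx
  have hexp_neg : exp (-x) ≤ 1 := exp_le_one_iff.2 (neg_nonpos.2 hx)
  rw [sinh_eq]
  linarith

theorem abs_arsinh_le_two_mul_sqrt_abs (x : ℝ) : |arsinh x| ≤ 2 * √|x| := by
  refine abs_le_of_sq_le_sq ?_ (by positivity)
  calc arsinh x ^ 2 = |arsinh x| ^ 2 := (sq_abs _).symm
    _ ≤ 4 * sinh |arsinh x| := sq_le_four_mul_sinh (abs_nonneg _)
    _ = 4 * |x| := by rw [← abs_sinh, sinh_arsinh]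
    _ = (2 * √|x|) ^ 2 := by rw [mul_pow, sq_sqrt (abs_nonneg x)]; norm_num

theorem abs_integral_arsinh_div_le {f : ℝ → ℝ} {a b c M : ℝ}
    (hf : ∀ u ∈ Set.uIoc b c, |f u| ≤ M) :
    |∫ u in b..c, arsinh (f u / a)| ≤ 2 * √(M / |a|) * |c - b| := by
  have hintegrand : ∀ u ∈ Set.uIoc b c, ‖arsinh (f u / a)‖ ≤ 2 * √(M / |a|) := fun u hu ↦ calc
    |arsinh (f u / a)| ≤ 2 * √|f u / a| := abs_arsinh_le_two_mul_sqrt_abs _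
    _ = 2 * √(|f u| / |a|) := by rw [abs_div]
    _ ≤ 2 * √(M / |a|) := by gcongr; exact hf u hu
  exact intervalIntegral.norm_integral_le_of_norm_le_const hintegrand

theorem tendsto_integral_arsinh_div_of_isLittleO_sqrt {α : Type*} {l : Filter α} {f : ℝ → ℝ}
    {a b : α → ℝ} (hf : f =O[𝓝 0] fun _ ↦ (1 : ℝ)) (hb : Tendsto b l (𝓝 0))
    (hba : b =o[l] fun t ↦ √|a t|) :
    Tendsto (fun t ↦ ∫ u in (0 : ℝ)..b t, arsinh (f u / a t)) l (𝓝 0) := by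
  obtain ⟨M, hM⟩ := hf.bound
  have hbound : ∀ᶠ t in l, ∀ u ∈ Set.uIcc 0 (b t), |f u| ≤ M := by
    simpa using (tendsto_const_nhds.uIcc hb).eventually hM.smallSets
  have hlim : Tendsto (fun t ↦ 2 * √M * |b t / √(|a t|)|) l (𝓝 0) := by
    simpa using hba.tendsto_div_nhds_zero.abs.const_mul (2 * √M)
  refine squeeze_zero_norm' ?_ hlim
  filter_upwards [hbound] with t ht
  calc |∫ u in (0 : ℝ)..b t, arsinh (f u / a t)|
      ≤ 2 * √(M / |a t|) * |b t - 0| :=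
        abs_integral_arsinh_div_le fun u hu ↦ ht u (Set.uIoc_subset_uIcc hu)
    _ = 2 * √M * |b t / √(|a t|)| := by
      rw [sub_zero, sqrt_div' M (abs_nonneg _), abs_div, abs_of_nonneg (sqrt_nonneg _)]
      ring

theorem isLittleO_id_sqrt_abs : (fun x : ℝ ↦ x) =o[𝓝 0] fun x ↦ √|x| := by
  have hsqrt : Tendsto (fun x : ℝ ↦ √|x|) (𝓝 0) (𝓝 0) :=
    (by fun_prop : Continuous fun x : ℝ ↦ √|x|).tendsto' 0 0 (by simp)
  have hsq : (fun x : ℝ ↦ √|x| ^ 2) =o[𝓝 0] fun x ↦ √|x| :=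
    (isLittleO_pow_id one_lt_two).comp_tendsto hsqrt
  simp only [sq_sqrt (abs_nonneg _)] at hsq
  exact isLittleO_abs_left.1 hsq

theorem isBigO_arsinh_id : arsinh =O[𝓝 0] fun x ↦ x := by
  simpa only [arsinh_zero, sub_zero] using (hasDerivAt_arsinh 0).isBigO_sub

theorem tendsto_integral_arsinh_cosh_div_zero_general :
    Tendsto (fun a : ℝ ↦ ∫ u in 0..arsinh a, arsinh (cosh u / a)) (𝓝[≠] 0) (𝓝 0) := by
  have hcosh : cosh =O[𝓝 0] fun _ ↦ (1 : ℝ) := (continuous_cosh.tendsto 0).isBigO_one ℝ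
  have harsinh : Tendsto arsinh (𝓝 0) (𝓝 0) := continuous_arsinh.tendsto' 0 0 arsinh_zero
  have harsinh_sqrt : arsinh =o[𝓝 0] fun a ↦ √|a| :=
    isBigO_arsinh_id.trans_isLittleO isLittleO_id_sqrt_abs
  exact (tendsto_integral_arsinh_div_of_isLittleO_sqrt hcosh harsinh harsinh_sqrt).mono_left
    nhdsWithin_le_nhds

theorem tendsto_integral_arsinh_cosh_div_zero :
    Filter.Tendsto
      (fun a : ℝ => ∫ u in (0 : ℝ)..(Real.arsinh a), Real.arsinh (Real.cosh u / a))
      (nhdsWithin 0 (Set.Ioi 0)) (nhds 0) := by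
  exact tendsto_integral_arsinh_cosh_div_zero_general.mono_left (nhdsGT_le_nhdsNE 0)
end

section
/- The improper integral ∫_0^∞ ln( coth(x) ) dx converges and equals π²/8. -/
open MeasureTheory Real

/-- The hyperbolic cotangent, `coth x = cosh x / sinh x`. -/
noncomputable def coth (x : ℝ) : ℝ := Real.cosh x / Real.sinh x

/-!
For `x > 0` put `q = exp (-2x)`. Then `coth x = (1 + q) / (1 - q)`, so the expansion
`log ((1 + q) / (1 - q)) = ∑ 2 q ^ (2k+1) / (2k+1)` writes `log (coth x)` as a series of decaying
exponentials with positive coefficients. Integrating term by term gives `∑ 1 / (2k+1) ^ 2`, which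
is what is left of `∑ 1 / n ^ 2 = π ^ 2 / 6` after removing its even part, a quarter of the whole.
-/

section TermwiseIntegration

variable {ι α E : Type*} [MeasurableSpace α] {μ : Measure α} [NormedAddCommGroup E]
  {F : ι → α → E} {f : α → E}

theorem tsum_lintegral_enorm_ne_top_of_summable_integral_norm
    (hF_int : ∀ i, Integrable (F i) μ) (hF_sum : Summable fun i ↦ ∫ a, ‖F i a‖ ∂μ) :
    ∑' i, ∫⁻ a, ‖F i a‖ₑ ∂μ ≠ ⊤ := by
  simp_rw [← fun i ↦ ofReal_integral_norm_eq_lintegral_enorm (hF_int i)]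
  exact hF_sum.tsum_ofReal_ne_top

theorem integrable_of_hasSum_of_summable_integral_norm [Countable ι]
    (hF_int : ∀ i, Integrable (F i) μ) (hF_sum : Summable fun i ↦ ∫ a, ‖F i a‖ ∂μ)
    (hf : ∀ᵐ a ∂μ, HasSum (F · a) (f a)) : Integrable f μ := by
  refine ⟨aestronglyMeasurable_of_tendsto_ae Filter.atTop
    (fun s ↦ Finset.aestronglyMeasurable_fun_sum s fun i _ ↦ (hF_int i).1) hf, ?_⟩
  calc ∫⁻ a, ‖f a‖ₑ ∂μ
      ≤ ∫⁻ a, ∑' i, ‖F i a‖ₑ ∂μ := lintegral_mono_ae <| hf.mono fun a ha ↦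
        ha.enorm_le_of_bounded ENNReal.summable.hasSum fun _ ↦ le_rfl
    _ = ∑' i, ∫⁻ a, ‖F i a‖ₑ ∂μ := lintegral_tsum fun i ↦ (hF_int i).1.enorm
    _ < ⊤ := (tsum_lintegral_enorm_ne_top_of_summable_integral_norm hF_int hF_sum).lt_top

end TermwiseIntegration

section ExponentialSeries

theorem integral_exp_neg_mul_Ioi_zero {p : ℝ} (hp : 0 < p) :
    ∫ x in Set.Ioi 0, rexp (-p * x) = p⁻¹ := by
  rw [integral_exp_mul_Ioi (neg_neg_of_pos hp), mul_zero, exp_zero, neg_div_neg_eq, one_div]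

variable {ι E : Type*} [NormedAddCommGroup E] [NormedSpace ℝ E]

theorem integrableOn_exp_neg_mul_smul_Ioi {p : ℝ} (hp : 0 < p) (a : ℝ) (c : E) :
    IntegrableOn (fun x ↦ rexp (-p * x) • c) (Set.Ioi a) :=
  (integrableOn_exp_mul_Ioi (neg_neg_of_pos hp) a).smul_const c

theorem integral_norm_exp_neg_mul_smul_Ioi_zero {p : ℝ} (hp : 0 < p) (c : E) :
    ∫ x in Set.Ioi 0, ‖rexp (-p * x) • c‖ = p⁻¹ * ‖c‖ := by
  simp_rw [norm_smul, Real.norm_of_nonneg (exp_nonneg _), integral_mul_const,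
    integral_exp_neg_mul_Ioi_zero hp]

variable [Countable ι] {c : ι → E} {p : ι → ℝ} {f : ℝ → E}

theorem integrableOn_Ioi_of_hasSum_exp_neg_mul_smul (hp : ∀ i, 0 < p i)
    (hc : Summable fun i ↦ (p i)⁻¹ * ‖c i‖)
    (hf : ∀ x > 0, HasSum (fun i ↦ rexp (-p i * x) • c i) (f x)) :
    IntegrableOn f (Set.Ioi 0) := by
  refine integrable_of_hasSum_of_summable_integral_norm
    (fun i ↦ integrableOn_exp_neg_mul_smul_Ioi (hp i) 0 (c i)) ?_
    (ae_restrict_of_forall_mem measurableSet_Ioi hf)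
  simpa only [fun i ↦ integral_norm_exp_neg_mul_smul_Ioi_zero (hp i) (c i)] using hc

theorem hasSum_integral_Ioi_of_hasSum_exp_neg_mul_smul [CompleteSpace E] (hp : ∀ i, 0 < p i)
    (hc : Summable fun i ↦ (p i)⁻¹ * ‖c i‖)
    (hf : ∀ x > 0, HasSum (fun i ↦ rexp (-p i * x) • c i) (f x)) :
    HasSum (fun i ↦ (p i)⁻¹ • c i) (∫ x in Set.Ioi 0, f x) := by
  have termwise := hasSum_integral_of_summable_integral_norm
    (fun i ↦ integrableOn_exp_neg_mul_smul_Ioi (hp i) 0 (c i))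
    (by simpa only [fun i ↦ integral_norm_exp_neg_mul_smul_Ioi_zero (hp i) (c i)] using hc)
  rw [setIntegral_congr_fun measurableSet_Ioi fun x hx ↦ (hf x hx).tsum_eq] at termwise
  simpa only [integral_smul_const, fun i ↦ integral_exp_neg_mul_Ioi_zero (hp i)] using termwise

end ExponentialSeries

theorem hasSum_one_div_odd_pow {s : ℕ} {a : ℝ} (h : HasSum (fun n : ℕ ↦ 1 / (n : ℝ) ^ s) a) :
    HasSum (fun k : ℕ ↦ 1 / (2 * k + 1 : ℝ) ^ s) ((1 - 1 / 2 ^ s) * a) := by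
  have even : HasSum (fun k : ℕ ↦ 1 / ((2 * k : ℕ) : ℝ) ^ s) (1 / 2 ^ s * a) := by
    simpa [mul_pow, mul_comm] using h.mul_left ((2 : ℝ) ^ s)⁻¹
  have odd : Summable fun k : ℕ ↦ 1 / ((2 * k + 1 : ℕ) : ℝ) ^ s :=
    h.summable.comp_injective (i := fun k ↦ 2 * k + 1) fun _ _ hkl ↦ by simpa using hkl
  have split := (even.even_add_odd (f := fun n : ℕ ↦ 1 / (n : ℝ) ^ s) odd.hasSum).unique h
  have odd_sum : ∑' k : ℕ, 1 / ((2 * k + 1 : ℕ) : ℝ) ^ s = (1 - 1 / 2 ^ s) * a := by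
    linear_combination split
  rw [← odd_sum]
  simpa using odd.hasSum

theorem hasSum_one_div_odd_sq : HasSum (fun k : ℕ ↦ 1 / (2 * k + 1 : ℝ) ^ 2) (π ^ 2 / 8) := by
  convert hasSum_one_div_odd_pow hasSum_zeta_two using 1
  ring

theorem coth_eq_one_add_exp_div_one_sub_exp (x : ℝ) :
    coth x = (1 + rexp (-2 * x)) / (1 - rexp (-2 * x)) := by
  have hsq : rexp (-2 * x) = rexp (-x) * rexp (-x) := by rw [← exp_add]; ring_nf
  have hinv : rexp (-x) * rexp x = 1 := by rw [← exp_add]; simp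
  rw [coth, cosh_eq, sinh_eq, div_div_div_cancel_right₀ two_ne_zero,
    ← mul_div_mul_left _ _ (exp_ne_zero (-x)), mul_add, mul_sub, hinv, hsq]

theorem hasSum_log_one_add_div_one_sub {q : ℝ} (hq : |q| < 1) :
    HasSum (fun k : ℕ ↦ q ^ (2 * k + 1) * (2 / (2 * k + 1))) (log ((1 + q) / (1 - q))) := by
  obtain ⟨hneg, hpos⟩ := abs_lt.mp hq
  rw [log_div (by linarith) (by linarith)]
  convert hasSum_log_sub_log_of_abs_lt_one hq using 2
  ring

theorem hasSum_log_coth {x : ℝ} (hx : 0 < x) :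
    HasSum (fun k : ℕ ↦ rexp (-(2 * (2 * k + 1)) * x) * (2 / (2 * k + 1))) (log (coth x)) := by
  have hq : |rexp (-2 * x)| < 1 := by
    rw [abs_exp, exp_lt_one_iff]
    linarith
  rw [coth_eq_one_add_exp_div_one_sub_exp]
  convert hasSum_log_one_add_div_one_sub hq using 3 with k
  rw [← exp_nat_mul]
  push_cast
  ring_nf

theorem integral_log_coth_eq_pi_sq_div_eight :
    IntegrableOn (fun x => Real.log (coth x)) (Set.Ioi 0) volume ∧
      ∫ x in Set.Ioi (0 : ℝ), Real.log (coth x) = π ^ 2 / 8 := by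
  have rate_pos (k : ℕ) : (0 : ℝ) < 2 * (2 * k + 1) := by positivity
  have term_integral (k : ℕ) :
      (2 * (2 * k + 1) : ℝ)⁻¹ * (2 / (2 * k + 1)) = 1 / (2 * k + 1) ^ 2 := by
    field_simp
  have summable_norm : Summable fun k : ℕ ↦ (2 * (2 * k + 1) : ℝ)⁻¹ * ‖(2 / (2 * k + 1) : ℝ)‖ := by
    have coeff_nonneg (k : ℕ) : (0 : ℝ) ≤ 2 / (2 * k + 1) := by positivity
    simpa only [Real.norm_of_nonneg (coeff_nonneg _), term_integral]
      using hasSum_one_div_odd_sq.summable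
  have expansion (x : ℝ) (hx : x > 0) := hasSum_log_coth hx
  refine ⟨integrableOn_Ioi_of_hasSum_exp_neg_mul_smul rate_pos summable_norm expansion, ?_⟩
  have termwise := hasSum_integral_Ioi_of_hasSum_exp_neg_mul_smul rate_pos summable_norm expansion
  simp only [smul_eq_mul, term_integral] at termwise
  exact termwise.unique hasSum_one_div_odd_sq
end

section
/- Define F(α) = (1/2) ∫_0^∞ arctanh( α · tanh(x) ) / sinh(x) dx for α ∈ [0, 1). Then for every α ∈ (0, 1), F is differentiable at α with derivative F′(α) = (1/2) ∫_0^∞ cosh(x) / (1 + (1 − α²) sinh²(x)) dx; moreover F(0) = 0. -/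
/-!
For `x ≠ 0` the integrand `arctanh (a tanh x) / sinh x` has `a`-derivative
`(tanh x / sinh x) / (1 - (a tanh x)²)`, which `cosh² - sinh² = 1` turns into
`cosh x / (1 + (1 - a²) sinh² x)`. For `|a| ≤ r < 1` this derivative is at most
`(1 - r²)⁻¹ / cosh x`, which is integrable, so dominated convergence allows differentiation under
the integral sign. The integrand itself is controlled by `|arctanh z| ≤ |z| / (1 - z²)`.
-/

open MeasureTheory Real

/-- The inverse hyperbolic tangent, `arctanh z = (1/2) ln ((1 + z)/(1 − z))` on `(−1, 1)`. -/
noncomputable def arctanh (z : ℝ) : ℝ := Real.log ((1 + z) / (1 - z)) / 2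

@[simp]
theorem arctanh_zero : arctanh 0 = 0 := by
  simp [arctanh]

@[fun_prop]
theorem measurable_arctanh : Measurable arctanh := by
  unfold arctanh
  fun_prop

theorem hasDerivAt_arctanh {z : ℝ} (hz : |z| < 1) : HasDerivAt arctanh (1 - z ^ 2)⁻¹ z := by
  unfold arctanh
  simpa [div_eq_inv_mul] using
    hasDerivAt_half_log_one_add_div_one_sub_sub_sum_range 0 (abs_lt.1 hz).1 (abs_lt.1 hz).2

theorem abs_arctanh_le {z : ℝ} (hz : |z| < 1) : |arctanh z| ≤ |z| / (1 - z ^ 2) := by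
  -- the Taylor remainder estimate for the empty Taylor polynomial
  simpa [arctanh, div_eq_inv_mul, abs_mul] using sum_range_sub_log_div_le hz 0

theorem one_add_sq_le_four_mul_cosh (x : ℝ) : 1 + x ^ 2 ≤ 4 * cosh x := by
  have hexp : 1 + |x| + |x| ^ 2 / 2 ≤ exp |x| := quadratic_le_exp_of_nonneg (abs_nonneg x)
  rw [← cosh_abs, cosh_eq, ← sq_abs]
  linarith [abs_nonneg x, exp_pos (-|x|)]

theorem integrable_inv_cosh : Integrable fun x : ℝ ↦ (cosh x)⁻¹ := by
  refine (integrable_inv_one_add_sq.const_mul 4).mono' (by fun_prop) (.of_forall fun x ↦ ?_)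
  rw [norm_of_nonneg (inv_nonneg.2 (cosh_pos x).le), inv_le_iff_one_le_mul₀ (cosh_pos x),
    ← div_eq_mul_inv, div_mul_eq_mul_div, one_le_div (by positivity)]
  exact one_add_sq_le_four_mul_cosh x

theorem abs_mul_tanh_le_abs (a x : ℝ) : |a * tanh x| ≤ |a| := by
  rw [abs_mul]
  exact mul_le_of_le_one_right (abs_nonneg a) (abs_tanh_lt_one x).le

theorem tanh_div_sinh {x : ℝ} (hx : x ≠ 0) : tanh x / sinh x = (cosh x)⁻¹ := by
  rw [tanh_eq_sinh_div_cosh, div_div_cancel_left' (sinh_ne_zero.2 hx)]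

theorem cosh_div_one_add_mul_sinh_sq (a x : ℝ) :
    cosh x / (1 + (1 - a ^ 2) * sinh x ^ 2) = (1 - (a * tanh x) ^ 2)⁻¹ * (cosh x)⁻¹ := by
  have hcosh : cosh x ≠ 0 := (cosh_pos x).ne'
  have hden : 1 + (1 - a ^ 2) * sinh x ^ 2 = cosh x * ((1 - (a * tanh x) ^ 2) * cosh x) := by
    rw [tanh_eq_sinh_div_cosh]
    field_simp
    linear_combination -cosh_sq x
  rw [hden, div_mul_cancel_left₀ hcosh, mul_inv]

theorem abs_cosh_div_one_add_mul_sinh_sq_le {a r : ℝ} (har : |a| ≤ r) (hr : r < 1) (x : ℝ) :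
    |cosh x / (1 + (1 - a ^ 2) * sinh x ^ 2)| ≤ (1 - r ^ 2)⁻¹ * (cosh x)⁻¹ := by
  have hr_sq : r ^ 2 < 1 := (sq_lt_one_iff₀ ((abs_nonneg a).trans har)).2 hr
  have hsq : (a * tanh x) ^ 2 ≤ r ^ 2 :=
    sq_le_sq.2 ((abs_mul_tanh_le_abs a x).trans (har.trans (le_abs_self r)))
  have hcosh : 0 < cosh x := cosh_pos x
  rw [cosh_div_one_add_mul_sinh_sq, abs_of_nonneg (mul_nonneg (inv_nonneg.2 (by linarith))
    (inv_nonneg.2 hcosh.le))]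
  gcongr

theorem hasDerivAt_arctanh_mul_tanh_div_sinh {a x : ℝ} (ha : |a| < 1) (hx : x ≠ 0) :
    HasDerivAt (fun b ↦ arctanh (b * tanh x) / sinh x)
      (cosh x / (1 + (1 - a ^ 2) * sinh x ^ 2)) a := by
  have harctanh := hasDerivAt_arctanh ((abs_mul_tanh_le_abs a x).trans_lt ha)
  refine ((harctanh.comp a (hasDerivAt_mul_const (tanh x))).div_const (sinh x)).congr_deriv ?_
  rw [cosh_div_one_add_mul_sinh_sq, mul_div_assoc, tanh_div_sinh hx]

theorem abs_arctanh_mul_tanh_div_sinh_le {a : ℝ} (ha : |a| < 1) (x : ℝ) :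
    |arctanh (a * tanh x) / sinh x| ≤ |a| * |cosh x / (1 + (1 - a ^ 2) * sinh x ^ 2)| := by
  rcases eq_or_ne x 0 with rfl | hx
  · simp
  have hlt : |a * tanh x| < 1 := (abs_mul_tanh_le_abs a x).trans_lt ha
  have hpos : 0 < 1 - (a * tanh x) ^ 2 := sub_pos.2 ((sq_lt_one_iff_abs_lt_one _).2 hlt)
  calc |arctanh (a * tanh x) / sinh x|
      = |arctanh (a * tanh x)| / |sinh x| := abs_div _ _
    _ ≤ |a * tanh x| / (1 - (a * tanh x) ^ 2) / |sinh x| := by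
        gcongr
        exact abs_arctanh_le hlt
    _ = |a| * |(1 - (a * tanh x) ^ 2)⁻¹ * (tanh x / sinh x)| := by
        rw [abs_mul, abs_mul, abs_div, abs_of_pos (inv_pos.2 hpos)]
        ring
    _ = |a| * |cosh x / (1 + (1 - a ^ 2) * sinh x ^ 2)| := by
        rw [tanh_div_sinh hx, cosh_div_one_add_mul_sinh_sq]

theorem measurable_arctanh_mul_tanh_div_sinh (a : ℝ) :
    Measurable fun x ↦ arctanh (a * tanh x) / sinh x := by
  simp only [tanh_eq_sinh_div_cosh]
  fun_prop

theorem integrable_cosh_div_one_add_mul_sinh_sq {a : ℝ} (ha : |a| < 1) :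
    Integrable fun x ↦ cosh x / (1 + (1 - a ^ 2) * sinh x ^ 2) :=
  (integrable_inv_cosh.const_mul _).mono' (Measurable.aestronglyMeasurable (by fun_prop))
    (.of_forall (abs_cosh_div_one_add_mul_sinh_sq_le le_rfl ha))

theorem integrable_arctanh_mul_tanh_div_sinh {a : ℝ} (ha : |a| < 1) :
    Integrable fun x ↦ arctanh (a * tanh x) / sinh x :=
  ((integrable_cosh_div_one_add_mul_sinh_sq ha).norm.const_mul |a|).mono'
    (measurable_arctanh_mul_tanh_div_sinh a).aestronglyMeasurable
    (.of_forall (abs_arctanh_mul_tanh_div_sinh_le ha))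

theorem hasDerivAt_setIntegral_arctanh_mul_tanh_div_sinh (s : Set ℝ) {a : ℝ} (ha : |a| < 1) :
    HasDerivAt (fun b ↦ ∫ x in s, arctanh (b * tanh x) / sinh x)
      (∫ x in s, cosh x / (1 + (1 - a ^ 2) * sinh x ^ 2)) a := by
  obtain ⟨r, har, hr⟩ := exists_between ha
  have hnhds : ∀ᶠ b in nhds a, |b| < r := continuous_abs.continuousAt.eventually_lt_const har
  have hne : ∀ᵐ x ∂volume.restrict s, x ≠ 0 := ae_restrict_of_ae (Measure.ae_ne volume 0)
  refine (hasDerivAt_integral_of_dominated_loc_of_deriv_le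
    (F' := fun b x ↦ cosh x / (1 + (1 - b ^ 2) * sinh x ^ 2)) hnhds
    (.of_forall fun b ↦ (measurable_arctanh_mul_tanh_div_sinh b).aestronglyMeasurable)
    (integrable_arctanh_mul_tanh_div_sinh ha).restrict
    (integrable_cosh_div_one_add_mul_sinh_sq ha).restrict.aestronglyMeasurable
    (.of_forall fun x b hb ↦ abs_cosh_div_one_add_mul_sinh_sq_le (le_of_lt hb) hr x)
    (integrable_inv_cosh.restrict.const_mul _) ?_).2
  filter_upwards [hne] with x hx b hb
  exact hasDerivAt_arctanh_mul_tanh_div_sinh (lt_trans hb hr) hx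

theorem hasDerivAt_F_general (s : Set ℝ) (F : ℝ → ℝ)
    (hF : ∀ α : ℝ, F α = (1 / 2) * ∫ x in s, arctanh (α * tanh x) / sinh x) :
    (∀ α ∈ Set.Ioo (-1 : ℝ) 1,
        HasDerivAt F ((1 / 2) * ∫ x in s, cosh x / (1 + (1 - α ^ 2) * sinh x ^ 2)) α) ∧
      F 0 = 0 := by
  obtain rfl := funext hF
  exact ⟨fun α hα ↦ (hasDerivAt_setIntegral_arctanh_mul_tanh_div_sinh s (abs_lt.2 hα)).const_mul _,
    by simp⟩

theorem hasDerivAt_F (F : ℝ → ℝ)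
    (hF : ∀ α : ℝ, F α = (1 / 2) * ∫ x in Set.Ioi (0 : ℝ),
      arctanh (α * Real.tanh x) / Real.sinh x) :
    (∀ α ∈ Set.Ioo (0 : ℝ) 1,
        HasDerivAt F
          ((1 / 2) * ∫ x in Set.Ioi (0 : ℝ),
            Real.cosh x / (1 + (1 - α ^ 2) * Real.sinh x ^ 2)) α) ∧
      F 0 = 0 :=
  (hasDerivAt_F_general (Set.Ioi 0) F hF).imp_left fun hderiv α hα ↦
    hderiv α (Set.Ioo_subset_Ioo_left (by norm_num) hα)
end

section
/- For every integer n ≥ 2, the improper integral ∫_0^∞ (ln(coth(x)))^{n−1} dx converges and equals (n − 1)! · Σ_{q=0}^∞ 1/(2q + 1)^n. -/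
open MeasureTheory Real

/-!
The function `ψ(t) = log (coth (t / 2))` is an involution of `(0, ∞)`, since `u = ψ(t)` amounts to
the symmetric relation `sinh t * sinh u = 1`, and `ψ' = -1 / sinh`. Substituting `x = ψ(t) / 2`
turns the integral of `log (coth x) ^ (s - 1)` into the Mellin transform of `1 / (2 * sinh t)` at
`s`, which is computed termwise from the geometric expansion
`1 / (2 * sinh t) = ∑ exp (-(2 * q + 1) * t)`.
-/

open Set Filter Asymptotics
open scoped Topology

section LogCothHalf

/-- The function `t ↦ log (coth (t / 2))` on `(0, ∞)`, extended to an odd function on `ℝ`. It is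
written as the inverse hyperbolic cosecant of `sinh t`, a form in which it is visibly an
involution. -/
noncomputable def logCothHalf (t : ℝ) : ℝ := arsinh (sinh t)⁻¹

lemma logCothHalf_involutive : Function.Involutive logCothHalf := fun t => by
  simp only [logCothHalf, sinh_arsinh, inv_inv, arsinh_sinh]

lemma logCothHalf_pos_iff {t : ℝ} : 0 < logCothHalf t ↔ 0 < t := by
  rw [logCothHalf, arsinh_pos_iff, inv_pos, sinh_pos_iff]

lemma logCothHalf_image_Ioi : logCothHalf '' Ioi 0 = Ioi 0 := by
  rw [logCothHalf_involutive.image_eq_preimage_symm]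
  exact Set.ext fun _ => logCothHalf_pos_iff

lemma sinh_log_coth {x : ℝ} (hx : 0 < x) : sinh (log (coth x)) = (sinh (2 * x))⁻¹ := by
  have hsinh : 0 < sinh x := sinh_pos_iff.2 hx
  have hcosh : 0 < cosh x := cosh_pos x
  rw [coth, sinh_log (div_pos hcosh hsinh), sinh_two_mul]
  field_simp
  linear_combination cosh_sq_sub_sinh_sq x

lemma log_coth_eq_logCothHalf {x : ℝ} (hx : 0 < x) : log (coth x) = logCothHalf (2 * x) := by
  rw [logCothHalf, ← sinh_log_coth hx, arsinh_sinh]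

lemma hasDerivAt_logCothHalf {t : ℝ} (ht : 0 < t) :
    HasDerivAt logCothHalf (-(sinh t)⁻¹) t := by
  have hsinh : 0 < sinh t := sinh_pos_iff.2 ht
  have hcosh : 0 < cosh t := cosh_pos t
  have hsqrt : √(1 + (sinh t)⁻¹ ^ 2) = cosh t / sinh t := by
    rw [← sqrt_sq (div_pos hcosh hsinh).le, div_pow, cosh_sq']
    congr 1
    field_simp
    ring
  refine ((hasDerivAt_sinh t).inv hsinh.ne').arsinh.congr_deriv ?_
  rw [Pi.inv_apply, hsqrt, smul_eq_mul]
  field_simp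

end LogCothHalf

section ChangeOfVariables

variable {E : Type*} [NormedAddCommGroup E] [NormedSpace ℝ E]

lemma abs_deriv_smul_comp_logCothHalf (g : ℝ → E) {t : ℝ} (ht : t ∈ Ioi 0) :
    |-(sinh t)⁻¹| • g (logCothHalf (logCothHalf t)) = (sinh t)⁻¹ • g t := by
  rw [logCothHalf_involutive, abs_neg, abs_of_pos (inv_pos.2 (sinh_pos_iff.2 ht))]

lemma integrableOn_comp_logCothHalf_iff (g : ℝ → E) :
    IntegrableOn (fun t => g (logCothHalf t)) (Ioi 0) ↔
      IntegrableOn (fun t => (sinh t)⁻¹ • g t) (Ioi 0) := by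
  have h := integrableOn_image_iff_integrableOn_abs_deriv_smul measurableSet_Ioi
    (fun _ ht => (hasDerivAt_logCothHalf ht).hasDerivWithinAt)
    logCothHalf_involutive.injective.injOn (fun t => g (logCothHalf t))
  rw [logCothHalf_image_Ioi] at h
  exact h.trans (integrableOn_congr_fun (fun _ => abs_deriv_smul_comp_logCothHalf g)
    measurableSet_Ioi)

lemma integral_comp_logCothHalf (g : ℝ → E) :
    ∫ t in Ioi 0, g (logCothHalf t) = ∫ t in Ioi 0, (sinh t)⁻¹ • g t := by
  have h := integral_image_eq_integral_abs_deriv_smul measurableSet_Ioi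
    (fun _ ht => (hasDerivAt_logCothHalf ht).hasDerivWithinAt)
    logCothHalf_involutive.injective.injOn (fun t => g (logCothHalf t))
  rw [logCothHalf_image_Ioi] at h
  exact h.trans (setIntegral_congr_fun measurableSet_Ioi
    fun _ => abs_deriv_smul_comp_logCothHalf g)

lemma integrableOn_comp_log_coth_iff (g : ℝ → E) :
    IntegrableOn (fun x => g (log (coth x))) (Ioi 0) ↔
      IntegrableOn (fun t => (2 * sinh t)⁻¹ • g t) (Ioi 0) := by
  calc IntegrableOn (fun x => g (log (coth x))) (Ioi 0)
      ↔ IntegrableOn (fun x => g (logCothHalf (2 * x))) (Ioi 0) :=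
        integrableOn_congr_fun (fun _ hx => congrArg g (log_coth_eq_logCothHalf hx))
          measurableSet_Ioi
    _ ↔ IntegrableOn (fun t => g (logCothHalf t)) (Ioi 0) := by
        rw [integrableOn_Ioi_comp_mul_left_iff (fun t => g (logCothHalf t)) 0 two_pos, mul_zero]
    _ ↔ IntegrableOn (fun t => (sinh t)⁻¹ • g t) (Ioi 0) := integrableOn_comp_logCothHalf_iff g
    _ ↔ IntegrableOn (fun t => (2 * sinh t)⁻¹ • g t) (Ioi 0) := by
        simp only [mul_inv, mul_smul]
        exact (integrable_smul_iff (inv_ne_zero two_ne_zero) _).symm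

lemma integral_comp_log_coth (g : ℝ → E) :
    ∫ x in Ioi 0, g (log (coth x)) = ∫ t in Ioi 0, (2 * sinh t)⁻¹ • g t := by
  calc ∫ x in Ioi 0, g (log (coth x))
      = ∫ x in Ioi 0, g (logCothHalf (2 * x)) :=
        setIntegral_congr_fun measurableSet_Ioi
          fun _ hx => congrArg g (log_coth_eq_logCothHalf hx)
    _ = (2 : ℝ)⁻¹ • ∫ t in Ioi 0, g (logCothHalf t) := by
        rw [integral_comp_mul_left_Ioi (fun t => g (logCothHalf t)) 0 two_pos, mul_zero]
    _ = (2 : ℝ)⁻¹ • ∫ t in Ioi 0, (sinh t)⁻¹ • g t := by rw [integral_comp_logCothHalf]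
    _ = ∫ t in Ioi 0, (2 * sinh t)⁻¹ • g t := by
        simp only [mul_inv, mul_smul, integral_smul]

end ChangeOfVariables

section Mellin

lemma hasSum_exp_neg_odd_mul {t : ℝ} (ht : 0 < t) :
    HasSum (fun q : ℕ => exp (-(2 * q + 1) * t)) (2 * sinh t)⁻¹ := by
  have hlt : exp (-(2 * t)) < 1 := exp_lt_one_iff.2 (by linarith)
  have hsplit : 2 * sinh t = (1 - exp (-(2 * t))) * exp t := by
    rw [sinh_eq, sub_mul, ← exp_add]
    ring_nf
  have hterm (q : ℕ) : exp (-(2 * q + 1) * t) = exp (-(2 * t)) ^ q * exp (-t) := by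
    rw [← exp_nat_mul, ← exp_add]
    ring_nf
  simp only [hterm, hsplit, mul_inv, ← exp_neg]
  exact (hasSum_geometric_of_lt_one (exp_nonneg _) hlt).mul_right _

lemma inv_two_mul_sinh_isBigO_exp_neg :
    (fun t => (2 * sinh t)⁻¹) =O[atTop] fun t => exp (-t) := by
  refine .of_bound 2 ((eventually_ge_atTop 1).mono fun t ht => ?_)
  have hexp : 2 ≤ exp t := by linarith [add_one_le_exp t]
  have hexp_neg : exp (-t) ≤ 1 := exp_le_one_iff.2 (by linarith)
  have hsinh : exp t / 2 ≤ 2 * sinh t := by rw [sinh_eq]; linarith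
  calc ‖(2 * sinh t)⁻¹‖ = (2 * sinh t)⁻¹ :=
        norm_of_nonneg (inv_nonneg.2 (le_trans (by positivity) hsinh))
    _ ≤ (exp t / 2)⁻¹ := inv_anti₀ (by positivity) hsinh
    _ = 2 * ‖exp (-t)‖ := by rw [norm_of_nonneg (exp_nonneg _), exp_neg, inv_div, div_eq_mul_inv]

lemma inv_two_mul_sinh_isBigO_inv :
    (fun t => (2 * sinh t)⁻¹) =O[𝓝[>] 0] fun t => t⁻¹ := by
  refine .of_bound 1 (eventually_mem_nhdsWithin.mono fun t (ht : 0 < t) => ?_)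
  have hsinh : t ≤ sinh t := self_le_sinh_iff.2 ht.le
  rw [one_mul, norm_of_nonneg (inv_nonneg.2 (by linarith)), norm_of_nonneg (inv_nonneg.2 ht.le)]
  exact inv_anti₀ ht (by linarith)

lemma mellinConvergent_inv_two_mul_sinh {s : ℂ} (hs : 1 < s.re) :
    MellinConvergent (fun t => (((2 * sinh t)⁻¹ : ℝ) : ℂ)) s := by
  have hcont : ContinuousOn (fun t => (((2 * sinh t)⁻¹ : ℝ) : ℂ)) (Ioi 0) :=
    Complex.continuous_ofReal.comp_continuousOn <|
      (continuous_const.mul continuous_sinh).continuousOn.inv₀ fun t ht =>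
        (mul_pos two_pos (sinh_pos_iff.2 ht)).ne'
  refine mellinConvergent_of_isBigO_rpow_exp one_pos
    (hcont.locallyIntegrableOn measurableSet_Ioi) ?_ ?_ hs
  · simpa only [neg_mul, one_mul, Complex.isBigO_ofReal_left]
      using inv_two_mul_sinh_isBigO_exp_neg
  · simpa only [rpow_neg_one, Complex.isBigO_ofReal_left] using inv_two_mul_sinh_isBigO_inv

lemma summable_one_div_odd_rpow {r : ℝ} (hr : 1 < r) :
    Summable fun q : ℕ => 1 / (2 * (q : ℝ) + 1) ^ r := by
  have hinj : Function.Injective fun q : ℕ => 2 * q + 1 := fun a b h => by simpa using h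
  simpa [Function.comp_def] using (summable_one_div_nat_rpow.2 hr).comp_injective hinj

lemma hasMellin_inv_two_mul_sinh {s : ℂ} (hs : 1 < s.re) :
    HasMellin (fun t => (((2 * sinh t)⁻¹ : ℝ) : ℂ)) s
      (Complex.Gamma s * ∑' q : ℕ, 1 / (2 * (q : ℂ) + 1) ^ s) := by
  have hsum := hasSum_mellin (a := fun _ : ℕ => 1) (p := fun q => 2 * (q : ℝ) + 1) (s := s)
    (F := fun t => (((2 * sinh t)⁻¹ : ℝ) : ℂ)) (fun _ => .inr (by positivity)) (by linarith)
    (fun t ht => by simpa only [one_mul] using mod_cast hasSum_exp_neg_odd_mul ht)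
    (by simpa only [norm_one] using summable_one_div_odd_rpow hs)
  refine ⟨mellinConvergent_inv_two_mul_sinh hs, ?_⟩
  rw [← hsum.tsum_eq, ← tsum_mul_left]
  push_cast
  simp only [mul_div_assoc]

end Mellin

theorem integral_log_coth_pow_eq_factorial_mul_tsum_general {s : ℂ} (hs : 1 < s.re) :
    IntegrableOn (fun x => (log (coth x) : ℂ) ^ (s - 1)) (Ioi 0) volume ∧
      ∫ x in Ioi (0 : ℝ), (log (coth x) : ℂ) ^ (s - 1) =
        Complex.Gamma s * ∑' q : ℕ, 1 / (2 * (q : ℂ) + 1) ^ s := by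
  have hkernel (t : ℝ) : (t : ℂ) ^ (s - 1) • (((2 * sinh t)⁻¹ : ℝ) : ℂ) =
      (2 * sinh t)⁻¹ • (t : ℂ) ^ (s - 1) := by
    rw [smul_eq_mul, mul_comm, Complex.real_smul]
  have hmellin := hasMellin_inv_two_mul_sinh hs
  simp only [HasMellin, MellinConvergent, mellin, hkernel] at hmellin
  rwa [integrableOn_comp_log_coth_iff fun t : ℝ => (t : ℂ) ^ (s - 1),
    integral_comp_log_coth fun t : ℝ => (t : ℂ) ^ (s - 1)]

theorem integral_log_coth_pow_eq_factorial_mul_tsum (n : ℕ) (hn : 2 ≤ n) :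
    IntegrableOn (fun x => Real.log (coth x) ^ (n - 1)) (Set.Ioi 0) volume ∧
      ∫ x in Set.Ioi (0 : ℝ), Real.log (coth x) ^ (n - 1) =
        (Nat.factorial (n - 1)) * ∑' q : ℕ, (1 : ℝ) / (2 * (q : ℝ) + 1) ^ n := by
  obtain ⟨m, rfl⟩ : ∃ m, n = m + 1 := ⟨n - 1, by lia⟩
  have hexponent : ((m + 1 : ℕ) : ℂ) - 1 = m := by simp
  have hGamma : Complex.Gamma (m + 1 : ℕ) = m.factorial := mod_cast Complex.Gamma_nat_eq_factorial m
  have h := integral_log_coth_pow_eq_factorial_mul_tsum_general (s := (m + 1 : ℕ)) (mod_cast hn)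
  simp only [hexponent, hGamma, Complex.cpow_natCast] at h
  refine ⟨mod_cast h.1.re, Complex.ofReal_injective ?_⟩
  simpa [← integral_complex_ofReal, Complex.ofReal_tsum] using h.2
end
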